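/- Let k be a field, let Q₁, Q₂ be homogeneous degree-2 polynomials in k[u,v], and for i = 1,2,3 let R_i(s,t) = e_{2,i}s² + e_{1,i}st + e_{0,i}t² be quadratic forms in two variables over k. Set P_i(u,v) = R_i(Q₁(u,v), Q₂(u,v)) (a homogeneous degree-4 polynomial) and let N be the 3×3 matrix whose i-th column is (e_{2,i}, e_{1,i}, e_{0,i})ᵀ. Then det A_{P₁,P₂,P₃} = Res(Q₁,Q₂)³ · (det N)². -/

import Mathlib

open MvPolynomial

noncomputable section

/-- The coefficient of `u^i v^j` in a polynomial in `k[u,v]`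
(variables `X 0 = u`, `X 1 = v`). -/
def coeffUV {k : Type*} [Field k] (i j : ℕ) (P : MvPolynomial (Fin 2) k) : k :=
  MvPolynomial.coeff (Finsupp.single 0 i + Finsupp.single 1 j) P

/-- For homogeneous degree-4 polynomials `P₁, P₂, P₃` in `k[u,v]`, the `6×6` matrix
whose columns are the coefficient vectors of `u·P₁, v·P₁, u·P₂, v·P₂, u·P₃, v·P₃`
with respect to the basis `u⁵, u⁴v, u³v², u²v³, uv⁴, v⁵`. -/
def Amat {k : Type*} [Field k] (P₁ P₂ P₃ : MvPolynomial (Fin 2) k) :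
    Matrix (Fin 6) (Fin 6) k :=
  Matrix.of fun i j =>
    coeffUV (5 - (i : ℕ)) (i : ℕ)
      ((![X 0 * P₁, X 1 * P₁, X 0 * P₂, X 1 * P₂, X 0 * P₃, X 1 * P₃] :
          Fin 6 → MvPolynomial (Fin 2) k) j)

/-- The resultant of two binary quadratic forms
`Q = q₂u² + q₁uv + q₀v²` and `Q' = q₂'u² + q₁'uv + q₀'v²`:
`(q₂q₀' − q₀q₂')² − (q₂q₁' − q₁q₂')(q₁q₀' − q₀q₁')`. -/
def Res2 {k : Type*} [Field k] (Q Q' : MvPolynomial (Fin 2) k) : k :=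
  (coeffUV 2 0 Q * coeffUV 0 2 Q' - coeffUV 0 2 Q * coeffUV 2 0 Q') ^ 2 -
    (coeffUV 2 0 Q * coeffUV 1 1 Q' - coeffUV 1 1 Q * coeffUV 2 0 Q') *
      (coeffUV 1 1 Q * coeffUV 0 2 Q' - coeffUV 0 2 Q * coeffUV 1 1 Q')

/-- Coefficient of a monomial. -/
lemma coeffUV_mono {k : Type*} [Field k] (i j m n : ℕ) (a : k) :
    coeffUV i j (C a * (X 0 ^ m * X 1 ^ n)) = if m = i ∧ n = j then a else 0 := by
  have h : (C a * (X 0 ^ m * X 1 ^ n) : MvPolynomial (Fin 2) k) =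
      monomial (Finsupp.single 0 m + Finsupp.single 1 n) a := by
    rw [X_pow_eq_monomial, X_pow_eq_monomial, monomial_mul, C_mul_monomial]
    simp
  unfold coeffUV
  rw [h, coeff_monomial]
  congr 1
  apply propext
  constructor
  · intro h
    have h0 := DFunLike.congr_fun h 0
    have h1 := DFunLike.congr_fun h 1
    simp at h0 h1
    exact ⟨h0, h1⟩
  · rintro ⟨rfl, rfl⟩
    rfl

lemma coeffUV_add {k : Type*} [Field k] (i j : ℕ) (P Q : MvPolynomial (Fin 2) k) :
    coeffUV i j (P + Q) = coeffUV i j P + coeffUV i j Q := by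
  simp [coeffUV]

/-- A binary quadratic form is determined by its three coefficients. -/
lemma quad_eq {k : Type*} [Field k] (Q : MvPolynomial (Fin 2) k) (h : Q.IsHomogeneous 2) :
    Q = C (coeffUV 2 0 Q) * (X 0 ^ 2 * X 1 ^ 0) + C (coeffUV 1 1 Q) * (X 0 ^ 1 * X 1 ^ 1)
      + C (coeffUV 0 2 Q) * (X 0 ^ 0 * X 1 ^ 2) := by
  have key : ∀ (P : MvPolynomial (Fin 2) k) (d : Fin 2 →₀ ℕ),
      coeff d P = coeffUV (d 0) (d 1) P := by
    intro P d
    unfold coeffUV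
    congr 1
    ext i
    fin_cases i <;> simp
  ext d
  rw [key, key, coeffUV_add, coeffUV_add, coeffUV_mono, coeffUV_mono, coeffUV_mono]
  by_cases hd : d 0 + d 1 = 2
  · have : d 0 ≤ 2 := by omega
    generalize d 0 = x at *
    generalize d 1 = y at *
    interval_cases x
    · obtain rfl : y = 2 := by omega
      simp
    · obtain rfl : y = 1 := by omega
      simp
    · obtain rfl : y = 0 := by omega
      simp
  · rw [← key, h.coeff_eq_zero]
    · rw [if_neg (by omega), if_neg (by omega), if_neg (by omega)]
      simp
    · rwa [Finsupp.degree_eq_sum, Fin.sum_univ_two]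

/-- The quintic-coefficient matrix of the products of `u, v` with three quartics. -/
def qmat {k : Type*} [Field k] (p q r : Fin 5 → k) : Matrix (Fin 6) (Fin 6) k :=
  !![p 0, 0, q 0, 0, r 0, 0;
     p 1, p 0, q 1, q 0, r 1, r 0;
     p 2, p 1, q 2, q 1, r 2, r 1;
     p 3, p 2, q 3, q 2, r 3, r 2;
     p 4, p 3, q 4, q 3, r 4, r 3;
     0, p 4, 0, q 4, 0, r 4]

/-- The quartic with given coefficients. -/
def quart {k : Type*} [Field k] (p : Fin 5 → k) : MvPolynomial (Fin 2) k :=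
  C (p 0) * (X 0 ^ 4 * X 1 ^ 0) + C (p 1) * (X 0 ^ 3 * X 1 ^ 1) + C (p 2) * (X 0 ^ 2 * X 1 ^ 2)
    + C (p 3) * (X 0 ^ 1 * X 1 ^ 3) + C (p 4) * (X 0 ^ 0 * X 1 ^ 4)

lemma Amat_quart {k : Type*} [Field k] (p q r : Fin 5 → k) :
    Amat (quart p) (quart q) (quart r) = qmat p q r := by
  have hu : ∀ p : Fin 5 → k, X 0 * quart p = C (p 0) * (X 0 ^ 5 * X 1 ^ 0)
      + C (p 1) * (X 0 ^ 4 * X 1 ^ 1) + C (p 2) * (X 0 ^ 3 * X 1 ^ 2)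
      + C (p 3) * (X 0 ^ 2 * X 1 ^ 3) + C (p 4) * (X 0 ^ 1 * X 1 ^ 4) := by
    intro p; unfold quart; ring
  have hv : ∀ p : Fin 5 → k, X 1 * quart p = C (p 0) * (X 0 ^ 4 * X 1 ^ 1)
      + C (p 1) * (X 0 ^ 3 * X 1 ^ 2) + C (p 2) * (X 0 ^ 2 * X 1 ^ 3)
      + C (p 3) * (X 0 ^ 1 * X 1 ^ 4) + C (p 4) * (X 0 ^ 0 * X 1 ^ 5) := by
    intro p; unfold quart; ring
  have cu : ∀ (i j : ℕ) (p : Fin 5 → k), coeffUV i j (X 0 * quart p) =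
        (if 5 = i ∧ 0 = j then p 0 else 0) + (if 4 = i ∧ 1 = j then p 1 else 0)
        + (if 3 = i ∧ 2 = j then p 2 else 0) + (if 2 = i ∧ 3 = j then p 3 else 0)
        + (if 1 = i ∧ 4 = j then p 4 else 0) := by
    intro i j p
    rw [hu, coeffUV_add, coeffUV_add, coeffUV_add, coeffUV_add, coeffUV_mono, coeffUV_mono,
      coeffUV_mono, coeffUV_mono, coeffUV_mono]
  have cv : ∀ (i j : ℕ) (p : Fin 5 → k), coeffUV i j (X 1 * quart p) =
        (if 4 = i ∧ 1 = j then p 0 else 0) + (if 3 = i ∧ 2 = j then p 1 else 0)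
        + (if 2 = i ∧ 3 = j then p 2 else 0) + (if 1 = i ∧ 4 = j then p 3 else 0)
        + (if 0 = i ∧ 5 = j then p 4 else 0) := by
    intro i j p
    rw [hv, coeffUV_add, coeffUV_add, coeffUV_add, coeffUV_add, coeffUV_mono, coeffUV_mono,
      coeffUV_mono, coeffUV_mono, coeffUV_mono]
  clear hu hv
  unfold Amat
  ext i j
  fin_cases j <;> fin_cases i <;> simp [qmat, cu, cv]

/-- Coefficients of the product of two quadratics. -/
def pr {k : Type*} [Field k] (a b c d e f : k) : Fin 5 → k :=
  ![a * d, a * e + b * d, a * f + b * e + c * d, b * f + c * e, c * f]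

lemma det_base {k : Type*} [Field k] (a b c d e f : k) :
    (qmat (pr a b c a b c) (pr a b c d e f) (pr d e f d e f)).det =
      ((a * f - c * d) ^ 2 - (a * e - b * d) * (b * f - c * e)) ^ 3 := by
  simp [qmat, pr, Matrix.det_succ_row_zero, Fin.sum_univ_succ, Fin.succAbove]
  ring

/-- The matrix `N ⊗ I₂`. -/
def nmat {k : Type*} [Field k] (x y z : Fin 3 → k) : Matrix (Fin 6) (Fin 6) k :=
  !![x 0, 0, x 1, 0, x 2, 0;
     0, x 0, 0, x 1, 0, x 2;
     y 0, 0, y 1, 0, y 2, 0;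
     0, y 0, 0, y 1, 0, y 2;
     z 0, 0, z 1, 0, z 2, 0;
     0, z 0, 0, z 1, 0, z 2]

lemma det_nmat {k : Type*} [Field k] (x y z : Fin 3 → k) :
    (nmat x y z).det = (Matrix.of ![x, y, z] : Matrix (Fin 3) (Fin 3) k).det ^ 2 := by
  simp [nmat, Matrix.det_succ_row_zero, Fin.sum_univ_succ, Fin.succAbove]
  ring

set_option maxHeartbeats 2000000 in
lemma qmat_mul {k : Type*} [Field k] (p q r : Fin 5 → k) (x y z : Fin 3 → k) :
    qmat (x 0 • p + y 0 • q + z 0 • r) (x 1 • p + y 1 • q + z 1 • r)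
      (x 2 • p + y 2 • q + z 2 • r) = qmat p q r * nmat x y z := by
  ext i j
  fin_cases j <;> fin_cases i <;>
    simp [qmat, nmat, Matrix.mul_apply, Fin.sum_univ_succ] <;> ring

lemma comb_eq {k : Type*} [Field k] (a b c d e f x y z : k)
    (Q₁ Q₂ : MvPolynomial (Fin 2) k)
    (h₁ : Q₁ = C a * (X 0 ^ 2 * X 1 ^ 0) + C b * (X 0 ^ 1 * X 1 ^ 1) + C c * (X 0 ^ 0 * X 1 ^ 2))
    (h₂ : Q₂ = C d * (X 0 ^ 2 * X 1 ^ 0) + C e * (X 0 ^ 1 * X 1 ^ 1) + C f * (X 0 ^ 0 * X 1 ^ 2)) :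
    C x * Q₁ ^ 2 + C y * (Q₁ * Q₂) + C z * Q₂ ^ 2 =
      quart (x • pr a b c a b c + y • pr a b c d e f + z • pr d e f d e f) := by
  subst h₁ h₂
  simp [quart, pr]
  ring

/-- degree-2 cover of a conic: for homogeneous degree-2 polynomials
`Q₁, Q₂` in `k[u,v]` and quadratic forms `Rᵢ(s,t) = e₂ᵢs² + e₁ᵢst + e₀ᵢt²`, setting
`Pᵢ = Rᵢ(Q₁,Q₂)` and letting `N` be the `3×3` matrix with `i`-th column `(e₂ᵢ, e₁ᵢ, e₀ᵢ)ᵀ`,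
one has `det A_{P₁,P₂,P₃} = Res(Q₁,Q₂)³ · (det N)²`. -/
theorem stmt4 {k : Type*} [Field k] (Q₁ Q₂ : MvPolynomial (Fin 2) k)
    (h₁ : Q₁.IsHomogeneous 2) (h₂ : Q₂.IsHomogeneous 2)
    (e₂ e₁ e₀ : Fin 3 → k) :
    (Amat (C (e₂ 0) * Q₁ ^ 2 + C (e₁ 0) * (Q₁ * Q₂) + C (e₀ 0) * Q₂ ^ 2)
        (C (e₂ 1) * Q₁ ^ 2 + C (e₁ 1) * (Q₁ * Q₂) + C (e₀ 1) * Q₂ ^ 2)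
        (C (e₂ 2) * Q₁ ^ 2 + C (e₁ 2) * (Q₁ * Q₂) + C (e₀ 2) * Q₂ ^ 2)).det =
      Res2 Q₁ Q₂ ^ 3 * (Matrix.of ![e₂, e₁, e₀] : Matrix (Fin 3) (Fin 3) k).det ^ 2 := by
  have q₁ := quad_eq Q₁ h₁
  have q₂ := quad_eq Q₂ h₂
  rw [comb_eq _ _ _ _ _ _ _ _ _ Q₁ Q₂ q₁ q₂, comb_eq _ _ _ _ _ _ _ _ _ Q₁ Q₂ q₁ q₂,
    comb_eq _ _ _ _ _ _ _ _ _ Q₁ Q₂ q₁ q₂, Amat_quart, qmat_mul, Matrix.det_mul, det_base,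
    det_nmat]
  rfl
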